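/- arXiv:1801.00186 — 2 statements merged into one kernel-verified Lean document; each statement's English description precedes it below -/
import Mathlib

section
/- Let S ⊆ ℝ^n be a Borel measurable set, let 1 ≤ p < ∞ be real, let μ > (n−1) − n/p, and set ν = μ − (n−1)/p′ and ω = π^{(n−1)/(2p′)} · (Γ(n/2)/Γ(1/2))^{1/p} · Γ((μ + n/p − n + 1)/2) / Γ((μ + n/p)/2). Then ∫_{S^{n-1}} ∫_ℝ ( V_{n-1}(S ∩ (θ^⊥ + tθ)) )^p |t|^{νp} dt d*θ ≤ ω^p · ∫_S |x|^{μp} dx, the inequality holding in [0,∞]. (Case k = n−1 of the paper's weighted volume estimate for planar cross-sections of a measurable set.) -/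
open MeasureTheory Metric Real
open scoped ENNReal NNReal

noncomputable section

/-- The normalized (probability) surface measure `d*θ` on the unit sphere of
`EuclideanSpace ℝ (Fin n)`. -/
def sphMeasure (n : ℕ) : Measure (sphere (0 : EuclideanSpace ℝ (Fin n)) 1) :=
  ((volume : Measure (EuclideanSpace ℝ (Fin n))).toSphere Set.univ)⁻¹ •
    (volume : Measure (EuclideanSpace ℝ (Fin n))).toSphere

/-- The hyperplane Radon transform: `Rf(θ,t) = ∫_{θ^⊥} f(tθ + y) dy`, where `θ^⊥` carries its
canonical Lebesgue measure as an (n-1)-dimensional inner product space. -/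
def Radon (n : ℕ) (f : EuclideanSpace ℝ (Fin n) → ℝ≥0∞)
    (θ : sphere (0 : EuclideanSpace ℝ (Fin n)) 1) (t : ℝ) : ℝ≥0∞ :=
  ∫⁻ y : ((ℝ ∙ (θ : EuclideanSpace ℝ (Fin n)))ᗮ),
    f (t • (θ : EuclideanSpace ℝ (Fin n)) + (y : EuclideanSpace ℝ (Fin n)))

/-- `V_{n-1}(S ∩ (θ^⊥ + tθ))`: the (n-1)-dimensional Lebesgue measure, computed in `θ^⊥`,
of the section of `S` by the affine hyperplane `θ^⊥ + tθ`. -/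
def sectVol (n : ℕ) (S : Set (EuclideanSpace ℝ (Fin n)))
    (θ : sphere (0 : EuclideanSpace ℝ (Fin n)) 1) (t : ℝ) : ℝ≥0∞ :=
  volume {y : ((ℝ ∙ (θ : EuclideanSpace ℝ (Fin n)))ᗮ) |
    t • (θ : EuclideanSpace ℝ (Fin n)) + (y : EuclideanSpace ℝ (Fin n)) ∈ S}

/-!
Put `a = μ + n/p`. On a hyperplane at distance `|t|` from the origin, Hölder's inequality against
the weight `|x|^{-a}` bounds `(∫ f)^p` by `(∫ |x|^{-a})^{p-1} ∫ f^p |x|^{a(p-1)}`, where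
`∫ |x|^{-a}` is a constant times `|t|^{n-1-a}`; the condition on `μ` says exactly that `a > n-1`,
which makes this constant finite. After multiplication by `|t|^{νp}` the powers of `t` combine to
`|t|^{a-n} = |⟨θ, x⟩|^{a-n}`. Hence Fubini along the hyperplanes orthogonal to `θ`, followed by
averaging over `θ`, leaves `∫ f^p |x|^{a(p-1)} |x|^{a-n} = ∫ f^p |x|^{μp}` times the mean of
`|⟨θ, u⟩|^{a-n}` for a unit vector `u`. Gaussian integrals give the values of both constants: the
second times the power `p-1` of the first is `ω^p`.
-/

/-- The Radon transform `∫_{u^⊥} f(tu + y) dy` on an arbitrary finite-dimensional inner product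
space. The vector `u` need not be a unit vector: only for `‖u‖ = 1` is `t` the signed distance of
the hyperplane `tu + u^⊥` from the origin. -/
def hyperplaneIntegral {E : Type*} [NormedAddCommGroup E] [InnerProductSpace ℝ E]
    [FiniteDimensional ℝ E] [MeasurableSpace E] [BorelSpace E]
    (f : E → ℝ≥0∞) (u : E) (t : ℝ) : ℝ≥0∞ :=
  ∫⁻ y : (ℝ ∙ u)ᗮ, f (t • u + y)

/-- The value of `∫_{ℝ^m} (1 + |y|²)^{-a/2} dy`, which enters the estimate as the constant of
Hölder's inequality on a hyperplane; see `lintegral_add_norm_sq_rpow`. -/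
def cauchyIntegral (m a : ℝ) : ℝ :=
  π ^ (m / 2) * (Gamma ((a - m) / 2) / Gamma (a / 2))

/-- The mean of `|⟨θ, u⟩|^b` over the unit sphere of `ℝ^n`, where `u` is a unit vector; see
`laverage_toSphere_enorm_inner_rpow`. -/
def sphereMoment (n b : ℝ) : ℝ :=
  Gamma (n / 2) / Gamma (1 / 2) * (Gamma ((b + 1) / 2) / Gamma ((b + n) / 2))

local notation "dim" => Module.finrank ℝ

section Constants

variable {n a p : ℝ}

theorem cauchyIntegral_pos {m : ℝ} (hm : 0 ≤ m) (ha : m < a) : 0 < cauchyIntegral m a := by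
  have := Gamma_pos_of_pos (show 0 < (a - m) / 2 by linarith)
  have := Gamma_pos_of_pos (show 0 < a / 2 by linarith)
  unfold cauchyIntegral
  positivity

theorem cauchyIntegral_rpow_mul_sphereMoment (hn : 1 ≤ n) (ha : n - 1 < a) (hp : 0 < p) :
    cauchyIntegral (n - 1) a ^ (p - 1) * sphereMoment n (a - n) =
      (π ^ ((n - 1) * (1 - 1 / p) / 2) * (Gamma (n / 2) / Gamma (1 / 2)) ^ (1 / p) *
        Gamma ((a - n + 1) / 2) / Gamma (a / 2)) ^ p := by
  have hA : 0 < Gamma (n / 2) / Gamma (1 / 2) :=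
    div_pos (Gamma_pos_of_pos (by linarith)) (Gamma_pos_of_pos (by norm_num))
  have hB : 0 < Gamma ((a - n + 1) / 2) / Gamma (a / 2) :=
    div_pos (Gamma_pos_of_pos (by linarith)) (Gamma_pos_of_pos (by linarith))
  have hπ : (n - 1) * (1 - 1 / p) / 2 * p = (n - 1) / 2 * (p - 1) := by field_simp
  rw [cauchyIntegral, sphereMoment, sub_add_cancel, show a - (n - 1) = a - n + 1 by ring,
    mul_div_assoc _ (Gamma _)]
  generalize Gamma ((a - n + 1) / 2) / Gamma (a / 2) = B at hB ⊢
  rw [mul_rpow (by positivity) hB.le, mul_rpow (by positivity) hB.le,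
    mul_rpow (by positivity) (by positivity), ← rpow_mul pi_pos.le, ← rpow_mul pi_pos.le, hπ,
    ← rpow_mul hA.le, one_div_mul_cancel hp.ne', rpow_one, rpow_sub_one hB.ne']
  field_simp

end Constants

section MeasureSpace

variable {α : Type*} [MeasurableSpace α] {m : Measure α}

theorem lintegral_ofReal_eq_of_integral_eq {f : α → ℝ} {c : ℝ} (hf : 0 ≤ᵐ[m] f) (hc : c ≠ 0)
    (h : ∫ x, f x ∂m = c) : ∫⁻ x, ENNReal.ofReal (f x) ∂m = ENNReal.ofReal c := by
  rw [← ofReal_integral_eq_lintegral_ofReal (.of_integral_ne_zero (h.trans_ne hc)) hf, h]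

theorem lintegral_rpow_le_lintegral_inv_rpow_mul {f w : α → ℝ≥0∞} {p : ℝ} (hf : AEMeasurable f m)
    (hw : AEMeasurable w m) (hw0 : ∀ x, w x ≠ 0) (hwtop : ∀ x, w x ≠ ∞) (hp : 1 ≤ p) :
    (∫⁻ x, f x ∂m) ^ p ≤ (∫⁻ x, (w x)⁻¹ ∂m) ^ (p - 1) * ∫⁻ x, f x ^ p * w x ^ (p - 1) ∂m := by
  have hp0 : 0 < p := one_pos.trans_le hp
  have hq : (0 : ℝ) ≤ 1 - 1 / p := sub_nonneg.2 ((div_le_one hp0).2 hp)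
  have factor (x : α) : f x = (f x ^ p * w x ^ (p - 1)) ^ (1 / p) * (w x)⁻¹ ^ (1 - 1 / p) := by
    rw [ENNReal.mul_rpow_of_nonneg _ _ (by positivity), ← ENNReal.rpow_mul, ← ENNReal.rpow_mul,
      mul_one_div_cancel hp0.ne', ENNReal.rpow_one, ENNReal.inv_rpow, mul_assoc,
      show (p - 1) * (1 / p) = 1 - 1 / p by field_simp,
      ENNReal.mul_inv_cancel (by simp [ENNReal.rpow_eq_zero_iff, hw0, hwtop])
        (ENNReal.rpow_ne_top_of_nonneg hq (hwtop x)), mul_one]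
  have holder : ∫⁻ x, f x ∂m ≤
      (∫⁻ x, f x ^ p * w x ^ (p - 1) ∂m) ^ (1 / p) * (∫⁻ x, (w x)⁻¹ ∂m) ^ (1 - 1 / p) :=
    (lintegral_congr factor).trans_le <| ENNReal.lintegral_mul_norm_pow_le
      (by fun_prop) (by fun_prop) (by positivity) hq (by ring)
  refine (ENNReal.rpow_le_rpow holder hp0.le).trans_eq ?_
  rw [ENNReal.mul_rpow_of_nonneg _ _ hp0.le, ← ENNReal.rpow_mul, ← ENNReal.rpow_mul,
    one_div_mul_cancel hp0.ne', ENNReal.rpow_one, mul_comm,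
    show (1 - 1 / p) * p = p - 1 by field_simp]

theorem lintegral_indicator_one_rpow_mul {S : Set α} (hS : MeasurableSet S) {p : ℝ} (hp : 0 < p)
    (w : α → ℝ≥0∞) : ∫⁻ x, S.indicator 1 x ^ p * w x ∂m = ∫⁻ x in S, w x ∂m := by
  rw [← lintegral_indicator hS]
  refine lintegral_congr fun x => ?_
  by_cases hx : x ∈ S <;> simp [hx, hp]

end MeasureSpace

section GaussianIntegrals

theorem lintegral_rpow_mul_exp_neg_mul_Ioi {c r : ℝ} (hc : 0 < c) (hr : 0 < r) :
    ∫⁻ s in Set.Ioi (0 : ℝ), ENNReal.ofReal (s ^ (c - 1) * rexp (-(r * s))) =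
      ENNReal.ofReal (r ^ (-c) * Gamma c) := by
  have := Gamma_pos_of_pos hc
  refine lintegral_ofReal_eq_of_integral_eq ?_ (by positivity) ?_
  · filter_upwards [ae_restrict_mem measurableSet_Ioi] with s (hs : 0 < s)
    exact mul_nonneg (rpow_nonneg hs.le _) (exp_pos _).le
  · rw [integral_rpow_mul_exp_neg_mul_Ioi hc hr, one_div, inv_rpow hr.le, rpow_neg hr.le]

theorem lintegral_rpow_mul_exp_neg_sq_Ioi {q : ℝ} (hq : -1 < q) :
    ∫⁻ r in Set.Ioi (0 : ℝ), ENNReal.ofReal (r ^ q * rexp (-r ^ 2)) =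
      ENNReal.ofReal (Gamma ((q + 1) / 2) / 2) := by
  have := Gamma_pos_of_pos (show 0 < (q + 1) / 2 by linarith)
  refine lintegral_ofReal_eq_of_integral_eq ?_ (by positivity) ?_
  · filter_upwards [ae_restrict_mem measurableSet_Ioi] with s (hs : 0 < s)
    exact mul_nonneg (rpow_nonneg hs.le _) (exp_pos _).le
  · have h := integral_rpow_mul_exp_neg_rpow two_pos hq
    simp only [rpow_two] at h
    rw [h, one_div_mul_eq_div]

theorem lintegral_enorm_rpow_mul_exp_neg_sq {q : ℝ} (hq : -1 < q) :
    ∫⁻ t : ℝ, ‖t‖ₑ ^ q * ENNReal.ofReal (rexp (-t ^ 2)) = ENNReal.ofReal (Gamma ((q + 1) / 2)) := by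
  have hΓ := Gamma_pos_of_pos (show 0 < (q + 1) / 2 by linarith)
  have hint : ∫ t : ℝ, |t| ^ q * rexp (-t ^ 2) = Gamma ((q + 1) / 2) := by
    have h := integral_rpow_mul_exp_neg_rpow two_pos hq
    have habs := integral_comp_abs (f := fun r : ℝ => r ^ q * rexp (-r ^ 2))
    simp only [rpow_two, sq_abs] at h habs
    rw [habs, h]
    ring
  rw [← lintegral_ofReal_eq_of_integral_eq (.of_forall fun t => by positivity) hΓ.ne' hint]
  refine lintegral_congr_ae ?_
  filter_upwards [Measure.ae_ne volume (0 : ℝ)] with t ht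
  rw [enorm_eq_ofReal_abs, ENNReal.ofReal_rpow_of_pos (abs_pos.2 ht),
    ENNReal.ofReal_mul (by positivity)]

variable {V : Type*} [NormedAddCommGroup V] [InnerProductSpace ℝ V] [FiniteDimensional ℝ V]
  [MeasurableSpace V] [BorelSpace V]

theorem lintegral_exp_neg_mul_norm_sq {s : ℝ} (hs : 0 < s) :
    ∫⁻ y : V, ENNReal.ofReal (rexp (-s * ‖y‖ ^ 2)) =
      ENNReal.ofReal ((π / s) ^ (dim V / 2 : ℝ)) :=
  lintegral_ofReal_eq_of_integral_eq (.of_forall fun _ => (exp_pos _).le) (by positivity)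
    (GaussianFourier.integral_rexp_neg_mul_sq_norm hs)

theorem lintegral_rpow_mul_exp_neg_add_norm_sq_mul {b c s : ℝ} (hs : 0 < s) :
    ∫⁻ y : V, ENNReal.ofReal (s ^ (c - 1) * rexp (-((b + ‖y‖ ^ 2) * s))) =
      ENNReal.ofReal (π ^ (dim V / 2 : ℝ)) *
        ENNReal.ofReal (s ^ (c - dim V / 2 - 1) * rexp (-(b * s))) := by
  have split (y : V) : ENNReal.ofReal (s ^ (c - 1) * rexp (-((b + ‖y‖ ^ 2) * s))) =
      ENNReal.ofReal (s ^ (c - 1) * rexp (-(b * s))) *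
        ENNReal.ofReal (rexp (-s * ‖y‖ ^ 2)) := by
    rw [← ENNReal.ofReal_mul (by positivity), mul_assoc, ← exp_add]
    ring_nf
  rw [lintegral_congr split, lintegral_const_mul _ (by fun_prop), lintegral_exp_neg_mul_norm_sq hs,
    ← ENNReal.ofReal_mul (by positivity), ← ENNReal.ofReal_mul (by positivity),
    div_rpow pi_pos.le hs.le, sub_right_comm, rpow_sub hs (c - 1)]
  ring_nf

-- Writing `(b + |y|²)^{-a/2} Γ(a/2)` as a Gamma integral of Gaussians in `y` reduces the
-- integral over `V` to a one-dimensional Gamma integral.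
theorem lintegral_add_norm_sq_rpow_mul_Gamma {a b : ℝ} (ha : dim V < a) (hb : 0 < b) :
    (∫⁻ y : V, ENNReal.ofReal ((b + ‖y‖ ^ 2) ^ (-(a / 2)))) * ENNReal.ofReal (Gamma (a / 2)) =
      ENNReal.ofReal (π ^ (dim V / 2 : ℝ)) *
        ENNReal.ofReal (b ^ (-(a / 2 - dim V / 2)) * Gamma (a / 2 - dim V / 2)) := by
  have ha2 : 0 < a / 2 := by linarith [(dim V).cast_nonneg (α := ℝ)]
  rw [← lintegral_mul_const _ (by fun_prop)]
  calc
    _ = ∫⁻ y : V, ∫⁻ s in Set.Ioi (0 : ℝ),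
          ENNReal.ofReal (s ^ (a / 2 - 1) * rexp (-((b + ‖y‖ ^ 2) * s))) :=
        lintegral_congr fun y => by
          rw [lintegral_rpow_mul_exp_neg_mul_Ioi ha2 (by positivity),
            ENNReal.ofReal_mul (by positivity)]
    _ = ∫⁻ s in Set.Ioi (0 : ℝ), ENNReal.ofReal (π ^ (dim V / 2 : ℝ)) *
          ENNReal.ofReal (s ^ (a / 2 - dim V / 2 - 1) * rexp (-(b * s))) := by
        rw [lintegral_lintegral_swap (by fun_prop)]
        exact setLIntegral_congr_fun measurableSet_Ioi fun s hs =>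
          lintegral_rpow_mul_exp_neg_add_norm_sq_mul hs
    _ = _ := by
        rw [lintegral_const_mul _ (by fun_prop),
          lintegral_rpow_mul_exp_neg_mul_Ioi (by linarith) hb]

theorem lintegral_add_norm_sq_rpow {a b : ℝ} (ha : dim V < a) (hb : 0 < b) :
    ∫⁻ y : V, ENNReal.ofReal ((b + ‖y‖ ^ 2) ^ (-(a / 2))) =
      ENNReal.ofReal (b ^ ((dim V - a) / 2)) * ENNReal.ofReal (cauchyIntegral (dim V) a) := by
  have hdim : (0 : ℝ) ≤ dim V := Nat.cast_nonneg _
  have hΓ : 0 < Gamma (a / 2) := Gamma_pos_of_pos (by linarith)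
  rw [← ENNReal.mul_left_inj (by simpa using hΓ) ENNReal.ofReal_ne_top,
    lintegral_add_norm_sq_rpow_mul_Gamma ha hb, ← ENNReal.ofReal_mul (by positivity),
    ← ENNReal.ofReal_mul (by positivity), ← ENNReal.ofReal_mul
      (mul_nonneg (by positivity) (cauchyIntegral_pos hdim ha).le), cauchyIntegral,
    ← sub_div, ← neg_div, neg_sub]
  field_simp

end GaussianIntegrals

section Hyperplanes

variable {E : Type*} [NormedAddCommGroup E] [InnerProductSpace ℝ E] {u : E}

theorem inner_smul_add_orthogonal (hu : ‖u‖ = 1) (t : ℝ) (y : (ℝ ∙ u)ᗮ) :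
    inner ℝ u (t • u + y) = t := by
  rw [inner_add_right, inner_smul_right, real_inner_self_eq_norm_sq, hu,
    Submodule.mem_orthogonal_singleton_iff_inner_right.1 y.2]
  simp

theorem norm_smul_add_orthogonal_sq (hu : ‖u‖ = 1) (t : ℝ) (y : (ℝ ∙ u)ᗮ) :
    ‖t • u + (y : E)‖ ^ 2 = t ^ 2 + ‖y‖ ^ 2 := by
  rw [norm_add_sq_real, inner_smul_left, Submodule.mem_orthogonal_singleton_iff_inner_right.1 y.2,
    norm_smul, hu]
  simp

theorem smul_add_orthogonal_ne_zero (hu : ‖u‖ = 1) {t : ℝ} (ht : t ≠ 0) (y : (ℝ ∙ u)ᗮ) :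
    t • u + (y : E) ≠ 0 := fun h =>
  ht (by rw [← inner_smul_add_orthogonal hu t y, h, inner_zero_right])

variable [FiniteDimensional ℝ E]

theorem finrank_orthogonal_span_singleton_of_norm_eq_one (hu : ‖u‖ = 1) :
    (dim (ℝ ∙ u)ᗮ : ℝ) = dim E - 1 := by
  have h := (ℝ ∙ u).finrank_add_finrank_orthogonal
  rw [finrank_span_singleton (norm_ne_zero_iff.1 (hu.trans_ne one_ne_zero))] at h
  rw [← h, Nat.cast_add, Nat.cast_one, add_sub_cancel_left]

variable [MeasurableSpace E] [BorelSpace E]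

theorem hyperplaneIntegral_indicator_one {S : Set E} (hS : MeasurableSet S) (u : E) (t : ℝ) :
    hyperplaneIntegral (S.indicator 1) u t = volume {y : (ℝ ∙ u)ᗮ | t • u + (y : E) ∈ S} := by
  have hmeas : Measurable fun y : (ℝ ∙ u)ᗮ => t • u + (y : E) := by fun_prop
  exact lintegral_indicator_one (hmeas hS)

theorem lintegral_hyperplaneIntegral (hu : ‖u‖ = 1) {f : E → ℝ≥0∞} (hf : Measurable f) :
    ∫⁻ t, hyperplaneIntegral f u t = ∫⁻ x, f x := by
  have hline := (LinearIsometryEquiv.toSpanUnitSingleton (𝕜 := ℝ) u hu).measurePreserving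
  have hsum := (ℝ ∙ u).orthogonalDecomposition.symm.measurePreserving.comp
    ((WithLp.volume_preserving_toLp (ℝ ∙ u) (ℝ ∙ u)ᗮ).comp (hline.prod (.id volume)))
  calc
    _ = ∫⁻ z : ℝ × (ℝ ∙ u)ᗮ, f (z.1 • u + z.2) := by
        rw [Measure.volume_eq_prod, lintegral_prod _ (by fun_prop)]
        rfl
    _ = ∫⁻ x, f x := by
        rw [← hsum.lintegral_comp hf, Measure.volume_eq_prod]
        simp

theorem hyperplaneIntegral_enorm_rpow_neg (hu : ‖u‖ = 1) {a t : ℝ} (ha : dim E - 1 < a)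
    (ht : t ≠ 0) : hyperplaneIntegral (fun x => ‖x‖ₑ ^ (-a)) u t =
      ‖t‖ₑ ^ (dim E - 1 - a) * ENNReal.ofReal (cauchyIntegral (dim E - 1) a) := by
  have hdim := finrank_orthogonal_span_singleton_of_norm_eq_one hu
  have hpow {r : ℝ} (hr : 0 < r) (c : ℝ) :
      ENNReal.ofReal r ^ c = ENNReal.ofReal ((r ^ 2) ^ (c / 2)) := by
    rw [ENNReal.ofReal_rpow_of_pos hr, ← rpow_natCast, ← rpow_mul hr.le]
    congr 2
    push_cast
    ring
  rw [enorm_eq_ofReal_abs, hpow (abs_pos.2 ht), sq_abs, ← hdim,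
    ← lintegral_add_norm_sq_rpow (by rwa [hdim]) (by positivity)]
  refine lintegral_congr fun y => ?_
  beta_reduce
  rw [← ofReal_norm, hpow (norm_pos_iff.2 (smul_add_orthogonal_ne_zero hu ht y)),
    norm_smul_add_orthogonal_sq hu, neg_div]

theorem hyperplaneIntegral_rpow_le (hu : ‖u‖ = 1) {f : E → ℝ≥0∞} (hf : Measurable f) {a p t : ℝ}
    (ha : dim E - 1 < a) (hp : 1 ≤ p) (ht : t ≠ 0) :
    hyperplaneIntegral f u t ^ p ≤
      (‖t‖ₑ ^ (dim E - 1 - a) * ENNReal.ofReal (cauchyIntegral (dim E - 1) a)) ^ (p - 1) *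
        hyperplaneIntegral (fun x => f x ^ p * ‖x‖ₑ ^ (a * (p - 1))) u t := by
  have hne (y : (ℝ ∙ u)ᗮ) : ‖t • u + (y : E)‖ₑ ≠ 0 :=
    enorm_ne_zero.2 (smul_add_orthogonal_ne_zero hu ht y)
  rw [← hyperplaneIntegral_enorm_rpow_neg hu ha ht]
  simp only [hyperplaneIntegral, ENNReal.rpow_neg, ENNReal.rpow_mul]
  exact lintegral_rpow_le_lintegral_inv_rpow_mul (by fun_prop) (by fun_prop)
    (fun y => (ENNReal.rpow_pos (pos_iff_ne_zero.2 (hne y)) enorm_ne_top).ne')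
    (fun y => ENNReal.rpow_ne_top_of_ne_zero (hne y) enorm_ne_top) hp

theorem lintegral_hyperplaneIntegral_rpow_mul_le (hu : ‖u‖ = 1) {f : E → ℝ≥0∞} (hf : Measurable f)
    {a p : ℝ} (ha : dim E - 1 < a) (hp : 1 ≤ p) :
    ∫⁻ t, hyperplaneIntegral f u t ^ p * ‖t‖ₑ ^ (a * p - dim E - (dim E - 1) * (p - 1)) ≤
      ENNReal.ofReal (cauchyIntegral (dim E - 1) a) ^ (p - 1) *
        ∫⁻ x, f x ^ p * ‖x‖ₑ ^ (a * (p - 1)) * ‖inner ℝ u x‖ₑ ^ (a - dim E) := by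
  have hp1 : 0 ≤ p - 1 := sub_nonneg.2 hp
  rw [← lintegral_hyperplaneIntegral hu (by fun_prop),
    ← lintegral_const_mul' _ _ (ENNReal.rpow_ne_top_of_nonneg hp1 ENNReal.ofReal_ne_top)]
  refine lintegral_mono_ae ?_
  filter_upwards [Measure.ae_ne volume (0 : ℝ)] with t ht
  have hinner : hyperplaneIntegral
      (fun x => f x ^ p * ‖x‖ₑ ^ (a * (p - 1)) * ‖inner ℝ u x‖ₑ ^ (a - dim E)) u t =
      hyperplaneIntegral (fun x => f x ^ p * ‖x‖ₑ ^ (a * (p - 1))) u t * ‖t‖ₑ ^ (a - dim E) := by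
    simp only [hyperplaneIntegral, inner_smul_add_orthogonal hu]
    exact lintegral_mul_const _ (by fun_prop)
  have hpow : ‖t‖ₑ ^ ((dim E - 1 - a) * (p - 1)) *
      ‖t‖ₑ ^ (a * p - dim E - (dim E - 1) * (p - 1)) = ‖t‖ₑ ^ (a - dim E) := by
    rw [← ENNReal.rpow_add _ _ (enorm_ne_zero.2 ht) enorm_ne_top]
    ring_nf
  rw [hinner, ← hpow, ENNReal.rpow_mul]
  refine (mul_le_mul_left (hyperplaneIntegral_rpow_le hu hf ha hp ht) _).trans_eq ?_
  rw [ENNReal.mul_rpow_of_nonneg _ _ hp1]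
  ring

end Hyperplanes

section PolarCoordinates

theorem lintegral_volumeIoiPow (k : ℕ) {g : ℝ → ℝ≥0∞} (hg : Measurable g) :
    ∫⁻ r, g r ∂Measure.volumeIoiPow k = ∫⁻ r in Set.Ioi (0 : ℝ), ENNReal.ofReal (r ^ k) * g r := by
  rw [Measure.volumeIoiPow, lintegral_withDensity_eq_lintegral_mul _ (by fun_prop)
    (g := fun r : Set.Ioi (0 : ℝ) => g r) (hg.comp measurable_subtype_coe)]
  exact lintegral_subtype_comap measurableSet_Ioi fun r : ℝ => ENNReal.ofReal (r ^ k) * g r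

theorem lintegral_eq_lintegral_toSphere {E : Type*} [NormedAddCommGroup E] [NormedSpace ℝ E]
    [FiniteDimensional ℝ E] [Nontrivial E] [MeasurableSpace E] [BorelSpace E] (m : Measure E)
    [m.IsAddHaarMeasure] {f : E → ℝ≥0∞} (hf : Measurable f) :
    ∫⁻ x, f x ∂m = ∫⁻ θ, ∫⁻ r in Set.Ioi (0 : ℝ),
      ENNReal.ofReal (r ^ (dim E - 1)) * f (r • (θ : E)) ∂volume ∂m.toSphere := by
  have hmeas : Measurable fun z : sphere (0 : E) 1 × Set.Ioi (0 : ℝ) => f (z.2.1 • (z.1 : E)) :=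
    hf.comp (by fun_prop)
  calc ∫⁻ x, f x ∂m = ∫⁻ x : ({0}ᶜ : Set E), f x ∂m.comap Subtype.val := by
        rw [lintegral_subtype_comap (measurableSet_singleton _).compl f, restrict_compl_singleton]
    _ = ∫⁻ z, f (z.2.1 • (z.1 : E)) ∂m.toSphere.prod (.volumeIoiPow (dim E - 1)) := by
        rw [← m.measurePreserving_homeomorphUnitSphereProd.lintegral_comp hmeas]
        refine lintegral_congr fun x => ?_
        have hx : ‖(x : E)‖ ≠ 0 := norm_ne_zero_iff.2 x.2
        simp [smul_smul, hx]
    _ = _ := by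
        rw [lintegral_prod _ hmeas.aemeasurable]
        exact lintegral_congr fun θ =>
          lintegral_volumeIoiPow _ (g := fun r => f (r • (θ : E))) (hf.comp (by fun_prop))

end PolarCoordinates

section Sphere

variable {E : Type*} [NormedAddCommGroup E] [InnerProductSpace ℝ E] [FiniteDimensional ℝ E]
  [MeasurableSpace E] [BorelSpace E]

theorem lintegral_enorm_inner_rpow_mul_exp_neg_norm_sq {u : E} (hu : ‖u‖ = 1) {b : ℝ}
    (hb : -1 < b) : ∫⁻ x : E, ‖inner ℝ u x‖ₑ ^ b * ENNReal.ofReal (rexp (-‖x‖ ^ 2)) =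
      ENNReal.ofReal (Gamma ((b + 1) / 2)) * ENNReal.ofReal (π ^ ((dim E - 1 : ℝ) / 2)) := by
  have hgauss : ∫⁻ y : (ℝ ∙ u)ᗮ, ENNReal.ofReal (rexp (-‖y‖ ^ 2)) =
      ENNReal.ofReal (π ^ ((dim E - 1 : ℝ) / 2)) := by
    simpa [finrank_orthogonal_span_singleton_of_norm_eq_one hu] using
      lintegral_exp_neg_mul_norm_sq (V := (ℝ ∙ u)ᗮ) one_pos
  rw [← lintegral_hyperplaneIntegral hu (by fun_prop), ← lintegral_enorm_rpow_mul_exp_neg_sq hb,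
    ← lintegral_mul_const _ (by fun_prop)]
  refine lintegral_congr fun t => ?_
  rw [← hgauss, ← lintegral_const_mul _ (by fun_prop)]
  refine lintegral_congr fun y => ?_
  beta_reduce
  rw [inner_smul_add_orthogonal hu, norm_smul_add_orthogonal_sq hu, mul_assoc,
    ← ENNReal.ofReal_mul (exp_pos _).le, ← exp_add, neg_add]

variable [Nontrivial E]

theorem lintegral_enorm_inner_rpow_mul_exp_neg_norm_sq_eq_lintegral_toSphere (u : E) {b : ℝ}
    (hb : 0 < b + dim E) :
    ∫⁻ x : E, ‖inner ℝ u x‖ₑ ^ b * ENNReal.ofReal (rexp (-‖x‖ ^ 2)) =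
      (∫⁻ θ, ‖inner ℝ u (θ : E)‖ₑ ^ b ∂(volume : Measure E).toSphere) *
        ENNReal.ofReal (Gamma ((b + dim E) / 2) / 2) := by
  have hradial := lintegral_rpow_mul_exp_neg_sq_Ioi (q := b + dim E - 1) (by linarith)
  rw [sub_add_cancel] at hradial
  rw [lintegral_eq_lintegral_toSphere volume (by fun_prop), ← lintegral_mul_const _ (by fun_prop)]
  refine lintegral_congr fun θ => ?_
  rw [← hradial, ← lintegral_const_mul _ (by fun_prop)]
  refine setLIntegral_congr_fun measurableSet_Ioi fun r (hr : 0 < r) => ?_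
  have hpow : r ^ (b + dim E - 1) = r ^ (dim E - 1) * r ^ b := by
    rw [← rpow_natCast, Nat.cast_sub Module.finrank_pos, ← rpow_add hr, Nat.cast_one]
    ring_nf
  rw [inner_smul_right, norm_smul, norm_eq_of_mem_sphere θ, mul_one, norm_eq_abs, abs_of_pos hr,
    enorm_mul, ENNReal.mul_rpow_of_ne_top enorm_ne_top enorm_ne_top, enorm_eq_ofReal hr.le,
    ENNReal.ofReal_rpow_of_pos hr, hpow, ENNReal.ofReal_mul (by positivity),
    ENNReal.ofReal_mul (by positivity)]
  ring

theorem lintegral_toSphere_enorm_inner_rpow {u : E} (hu : ‖u‖ = 1) {b : ℝ} (hb : -1 < b) :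
    ∫⁻ θ, ‖inner ℝ u (θ : E)‖ₑ ^ b ∂(volume : Measure E).toSphere =
      ENNReal.ofReal (2 * π ^ ((dim E - 1 : ℝ) / 2) *
        (Gamma ((b + 1) / 2) / Gamma ((b + dim E) / 2))) := by
  have hdim : (1 : ℝ) ≤ dim E := Nat.one_le_cast.2 Module.finrank_pos
  have hΓ₁ : 0 < Gamma ((b + 1) / 2) := Gamma_pos_of_pos (by linarith)
  have hΓ₂ : 0 < Gamma ((b + dim E) / 2) := Gamma_pos_of_pos (by linarith)
  rw [← ENNReal.mul_left_inj (c := ENNReal.ofReal (Gamma ((b + dim E) / 2) / 2))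
      (by simpa using hΓ₂) ENNReal.ofReal_ne_top,
    ← lintegral_enorm_inner_rpow_mul_exp_neg_norm_sq_eq_lintegral_toSphere u (by linarith),
    lintegral_enorm_inner_rpow_mul_exp_neg_norm_sq hu hb, ← ENNReal.ofReal_mul hΓ₁.le,
    ← ENNReal.ofReal_mul (by positivity)]
  field_simp

theorem laverage_toSphere_enorm_inner_rpow {x : E} (hx : x ≠ 0) {b : ℝ} (hb : -1 < b) :
    ⨍⁻ θ, ‖inner ℝ (θ : E) x‖ₑ ^ b ∂(volume : Measure E).toSphere =
      ENNReal.ofReal (sphereMoment (dim E) b) * ‖x‖ₑ ^ b := by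
  obtain ⟨u, hu, hxu⟩ : ∃ u : E, ‖u‖ = 1 ∧ x = ‖x‖ • u :=
    ⟨‖x‖⁻¹ • x, norm_smul_inv_norm hx, by simp [smul_smul, hx]⟩
  have hdim : (1 : ℝ) ≤ dim E := Nat.one_le_cast.2 Module.finrank_pos
  have : 0 < Gamma (1 / 2 : ℝ) / Gamma ((dim E : ℝ) / 2) :=
    div_pos (Gamma_pos_of_pos (by norm_num)) (Gamma_pos_of_pos (by linarith))
  have harea : (volume : Measure E).toSphere Set.univ = ENNReal.ofReal
      (2 * π ^ ((dim E - 1 : ℝ) / 2) * (Gamma (1 / 2) / Gamma ((dim E : ℝ) / 2))) := by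
    simpa using lintegral_toSphere_enorm_inner_rpow hu (b := 0) (by norm_num)
  have hscale (θ : sphere (0 : E) 1) :
      ‖inner ℝ (θ : E) x‖ₑ ^ b = ‖inner ℝ u (θ : E)‖ₑ ^ b * ‖x‖ₑ ^ b := by
    conv_lhs => rw [hxu, inner_smul_right, real_inner_comm, enorm_mul, enorm_norm]
    rw [ENNReal.mul_rpow_of_ne_top enorm_ne_top enorm_ne_top, mul_comm]
  simp_rw [hscale]
  rw [laverage_eq, lintegral_mul_const _ (by fun_prop), lintegral_toSphere_enorm_inner_rpow hu hb,
    harea, ENNReal.mul_div_right_comm, ← ENNReal.ofReal_div_of_pos (by positivity), sphereMoment]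
  congr 2
  field_simp

theorem laverage_toSphere_lintegral_mul_enorm_inner_rpow {g : E → ℝ≥0∞} (hg : Measurable g) {b : ℝ}
    (hb : -1 < b) :
    ⨍⁻ θ, (∫⁻ x, g x * ‖inner ℝ (θ : E) x‖ₑ ^ b) ∂(volume : Measure E).toSphere =
      ENNReal.ofReal (sphereMoment (dim E) b) * ∫⁻ x, g x * ‖x‖ₑ ^ b := by
  rw [laverage, lintegral_lintegral_swap (by fun_prop), ← lintegral_const_mul _ (by fun_prop)]
  refine lintegral_congr_ae ?_
  filter_upwards [Measure.ae_ne volume (0 : E)] with x hx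
  rw [lintegral_const_mul _ (by fun_prop), ← laverage, laverage_toSphere_enorm_inner_rpow hx hb]
  ring

theorem stmt8_general {f : E → ℝ≥0∞} (hf : Measurable f) {p μ ν ω : ℝ} (hp : 1 ≤ p)
    (hμ : μ > ((dim E : ℝ) - 1) - dim E / p)
    (hν : ν = μ - ((dim E : ℝ) - 1) * (1 - 1 / p))
    (hω : ω = π ^ (((dim E : ℝ) - 1) * (1 - 1 / p) / 2) *
      (Gamma ((dim E : ℝ) / 2) / Gamma (1 / 2)) ^ (1 / p) *
      Gamma ((μ + (dim E : ℝ) / p - dim E + 1) / 2) / Gamma ((μ + (dim E : ℝ) / p) / 2)) :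
    ⨍⁻ θ : sphere (0 : E) 1, (∫⁻ t : ℝ, hyperplaneIntegral f θ t ^ p * ‖t‖ₑ ^ (ν * p))
        ∂(volume : Measure E).toSphere ≤
      ENNReal.ofReal ω ^ p * ∫⁻ x, f x ^ p * ‖x‖ₑ ^ (μ * p) := by
  have hp0 : 0 < p := one_pos.trans_le hp
  have hdim : (1 : ℝ) ≤ dim E := Nat.one_le_cast.2 Module.finrank_pos
  set a : ℝ := μ + dim E / p with ha_def
  have ha : dim E - 1 < a := by linarith
  have hap : μ * p = a * p - dim E := by rw [ha_def]; field_simp; ring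
  have hνp : ν * p = a * p - dim E - (dim E - 1) * (p - 1) := by
    rw [hν, sub_mul, hap]; field_simp
  have hC := cauchyIntegral_pos (sub_nonneg.2 hdim) ha
  have hconst : ENNReal.ofReal (cauchyIntegral (dim E - 1) a) ^ (p - 1) *
      ENNReal.ofReal (sphereMoment (dim E) (a - dim E)) = ENNReal.ofReal ω ^ p := by
    have hω0 : 0 ≤ ω := by
      have := Gamma_pos_of_pos (show 0 < (a - dim E + 1) / 2 by linarith)
      have := Gamma_pos_of_pos (show 0 < a / 2 by linarith)
      rw [hω]
      positivity
    rw [ENNReal.ofReal_rpow_of_pos hC, ← ENNReal.ofReal_mul (by positivity),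
      cauchyIntegral_rpow_mul_sphereMoment hdim ha hp0, ← hω,
      ENNReal.ofReal_rpow_of_nonneg hω0 hp0.le]
  calc
    _ ≤ ⨍⁻ θ, (ENNReal.ofReal (cauchyIntegral (dim E - 1) a) ^ (p - 1) * ∫⁻ x,
          f x ^ p * ‖x‖ₑ ^ (a * (p - 1)) * ‖inner ℝ (θ : E) x‖ₑ ^ (a - dim E))
          ∂(volume : Measure E).toSphere := by
        rw [hνp]
        exact lintegral_mono fun θ =>
          lintegral_hyperplaneIntegral_rpow_mul_le (norm_eq_of_mem_sphere θ) hf ha hp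
    _ = ENNReal.ofReal ω ^ p *
          ∫⁻ x, f x ^ p * ‖x‖ₑ ^ (a * (p - 1)) * ‖x‖ₑ ^ (a - dim E) := by
        rw [laverage, lintegral_const_mul _ (by fun_prop), ← laverage,
          laverage_toSphere_lintegral_mul_enorm_inner_rpow (by fun_prop) (by linarith), ← mul_assoc,
          hconst]
    _ = _ := by
        congr 1
        refine lintegral_congr_ae ?_
        filter_upwards [Measure.ae_ne volume (0 : E)] with x hx
        rw [mul_assoc, ← ENNReal.rpow_add _ _ (enorm_ne_zero.2 hx) enorm_ne_top, hap]
        ring_nf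

end Sphere

/-- Weighted volume estimate for hyperplane cross-sections of a Borel measurable set
(case `k = n-1`). -/
theorem stmt8 (n : ℕ) (hn : 2 ≤ n) (S : Set (EuclideanSpace ℝ (Fin n))) (hS : MeasurableSet S)
    (p : ℝ) (hp : 1 ≤ p) (μ ν ω : ℝ)
    (hμ : μ > ((n : ℝ) - 1) - n / p)
    (hν : ν = μ - ((n : ℝ) - 1) * (1 - 1 / p))
    (hω : ω = Real.pi ^ (((n : ℝ) - 1) * (1 - 1 / p) / 2) *
      (Real.Gamma ((n : ℝ) / 2) / Real.Gamma (1 / 2)) ^ (1 / p) *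
      Real.Gamma ((μ + (n : ℝ) / p - n + 1) / 2) / Real.Gamma ((μ + (n : ℝ) / p) / 2)) :
    (∫⁻ θ, ∫⁻ t : ℝ, sectVol n S θ t ^ p * ENNReal.ofReal |t| ^ (ν * p) ∂volume
        ∂(sphMeasure n)) ≤
      ENNReal.ofReal ω ^ p * ∫⁻ x in S, ENNReal.ofReal ‖x‖ ^ (μ * p) := by
  have : NeZero n := ⟨by omega⟩
  have h := stmt8_general (measurable_one.indicator hS) hp (μ := μ) (ν := ν) (ω := ω)
    (by simpa using hμ) (by simpa using hν) (by simpa using hω)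
  simpa [hyperplaneIntegral_indicator_one hS,
    lintegral_indicator_one_rpow_mul hS (one_pos.trans_le hp), ← enorm_eq_ofReal_abs, ofReal_norm,
    sectVol, sphMeasure, laverage] using h
end
end

section
/- Let S ⊆ ℝ^n be a Borel measurable set and let μ > −1 be real. Then ∫_{S^{n-1}} ∫_ℝ V_{n-1}(S ∩ (θ^⊥ + tθ)) · |t|^μ dt d*θ = (Γ(n/2)/Γ(1/2)) · (Γ((μ+1)/2)/Γ((μ+n)/2)) · ∫_S |x|^μ dx, the equality holding in [0,∞]. (Case k = n−1, p = 1 of the paper's exact weighted identity for volumes of affine cross-sections of a measurable set.) -/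
open MeasureTheory Metric Real
open scoped ENNReal NNReal

noncomputable section

/-
Slicing by hyperplanes orthogonal to `θ` turns the inner integral over `t` into
`∫_S |⟨θ, x⟩|^μ dx`, so after exchanging integrals everything reduces to the spherical average of
`θ ↦ |⟨θ, x⟩|^μ`. By homogeneity it is enough to treat a unit vector `x = u`, and there the average
comes from evaluating the Gaussian integral `∫ |⟨u, x⟩|^μ exp (-‖x‖²) dx` in two ways: in polar
coordinates it is the spherical integral times `Γ((μ + n) / 2) / 2`, while slicing orthogonally
to `u` gives `π^((n - 1) / 2) Γ((μ + 1) / 2)`.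
-/

section PolarCoordinates

open Module

theorem lintegral_exp_neg_sq_mul_rpow {q : ℝ} (hq : -1 < q) :
    ∫⁻ r in Set.Ioi (0 : ℝ), ENNReal.ofReal (exp (-r ^ 2)) * ENNReal.ofReal r ^ q =
      ENNReal.ofReal (Gamma ((q + 1) / 2) / 2) := by
  have hint : IntegrableOn (fun r : ℝ ↦ r ^ q * exp (-r ^ 2)) (Set.Ioi 0) := by
    simpa only [rpow_two] using integrableOn_rpow_mul_exp_neg_rpow hq (two_pos (α := ℝ))
  have hval : ∫ r in Set.Ioi (0 : ℝ), r ^ q * exp (-r ^ 2) = Gamma ((q + 1) / 2) / 2 := by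
    simpa only [rpow_two, one_div_mul_eq_div] using
      integral_rpow_mul_exp_neg_rpow (two_pos (α := ℝ)) hq
  rw [← hval, ofReal_integral_eq_lintegral_ofReal hint]
  · refine setLIntegral_congr_fun measurableSet_Ioi fun r (hr : 0 < r) ↦ ?_
    rw [ENNReal.ofReal_mul (by positivity), ENNReal.ofReal_rpow_of_pos hr, mul_comm]
  · filter_upwards [ae_restrict_mem measurableSet_Ioi] with r (hr : 0 < r)
    exact mul_nonneg (rpow_nonneg hr.le q) (exp_pos _).le

variable {E : Type*} [NormedAddCommGroup E] [NormedSpace ℝ E] [FiniteDimensional ℝ E]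
  [Nontrivial E] [MeasurableSpace E] [BorelSpace E] (ν : Measure E) [ν.IsAddHaarMeasure]

theorem lintegral_eq_lintegral_toSphere_lintegral_Ioi {f : E → ℝ≥0∞} (hf : Measurable f) :
    ∫⁻ x, f x ∂ν = ∫⁻ ω, ∫⁻ r in Set.Ioi (0 : ℝ),
      ENNReal.ofReal (r ^ (finrank ℝ E - 1)) * f (r • (ω : E)) ∂volume ∂ν.toSphere := by
  have hmeas : Measurable fun p : sphere (0 : E) 1 × Set.Ioi (0 : ℝ) ↦ f (p.2.1 • p.1.1) :=
    hf.comp (by fun_prop)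
  calc ∫⁻ x, f x ∂ν = ∫⁻ x : ({0}ᶜ : Set E), f x ∂ν.comap (↑) := by
        rw [lintegral_subtype_comap (measurableSet_singleton _).compl, restrict_compl_singleton]
    _ = ∫⁻ p : sphere (0 : E) 1 × Set.Ioi (0 : ℝ), f (p.2.1 • p.1.1)
          ∂ν.toSphere.prod (.volumeIoiPow (finrank ℝ E - 1)) := by
        rw [← ν.measurePreserving_homeomorphUnitSphereProd.lintegral_comp hmeas]
        refine lintegral_congr fun x ↦ ?_
        have hx : ‖(x : E)‖ ≠ 0 := norm_ne_zero_iff.2 x.2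
        simp [smul_smul, hx]
    _ = _ := by
        rw [lintegral_prod _ hmeas.aemeasurable]
        refine lintegral_congr fun ω ↦ ?_
        rw [Measure.volumeIoiPow, lintegral_withDensity_eq_lintegral_mul _ (by fun_prop)
          (show Measurable fun r : Set.Ioi (0 : ℝ) ↦ f (r.1 • ω.1) from hf.comp (by fun_prop))]
        exact lintegral_subtype_comap measurableSet_Ioi fun r : ℝ ↦
          ENNReal.ofReal (r ^ (finrank ℝ E - 1)) * f (r • (ω : E))

theorem lintegral_exp_neg_norm_sq_mul_of_homogeneous {g : E → ℝ≥0∞} (hg : Measurable g) {q : ℝ}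
    (hq : -finrank ℝ E < q)
    (hom : ∀ (r : ℝ) (x : E), 0 < r → g (r • x) = ENNReal.ofReal r ^ q * g x) :
    ∫⁻ x, ENNReal.ofReal (exp (-‖x‖ ^ 2)) * g x ∂ν =
      (∫⁻ ω, g ω ∂ν.toSphere) * ENNReal.ofReal (Gamma ((q + finrank ℝ E) / 2) / 2) := by
  set d := finrank ℝ E
  have hd : ((d - 1 : ℕ) : ℝ) = d - 1 := Nat.cast_pred Module.finrank_pos
  have hradial := lintegral_exp_neg_sq_mul_rpow (q := q + (d - 1 : ℕ)) (by linarith)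
  rw [hd, show q + ((d : ℝ) - 1) + 1 = q + d by ring] at hradial
  rw [lintegral_eq_lintegral_toSphere_lintegral_Ioi ν (by fun_prop), ← hradial,
    ← lintegral_mul_const _ (by fun_prop)]
  refine lintegral_congr fun ω ↦ ?_
  rw [← lintegral_const_mul _ (by fun_prop)]
  refine setLIntegral_congr_fun measurableSet_Ioi fun r (hr : 0 < r) ↦ ?_
  have hnorm : ‖r • (ω : E)‖ = r := by simp [norm_smul, hr.le]
  simp only [hom r ω hr, hnorm, ← hd, ENNReal.rpow_natCast, ENNReal.ofReal_pow hr.le,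
    ENNReal.rpow_add q _ (ENNReal.ofReal_pos.2 hr).ne' ENNReal.ofReal_ne_top]
  ring

theorem lintegral_exp_neg_sq_mul_rpow_abs {q : ℝ} (hq : -1 < q) :
    ∫⁻ t : ℝ, ENNReal.ofReal (exp (-t ^ 2)) * ENNReal.ofReal |t| ^ q =
      ENNReal.ofReal (Gamma ((q + 1) / 2)) := by
  have hpolar := lintegral_exp_neg_norm_sq_mul_of_homogeneous (volume : Measure ℝ)
    (g := fun t ↦ ENNReal.ofReal ‖t‖ ^ q) (by fun_prop) (by simpa using hq) fun r t hr ↦ by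
      rw [norm_smul, norm_of_nonneg hr.le, ENNReal.ofReal_mul hr.le,
        ENNReal.mul_rpow_of_ne_top ENNReal.ofReal_ne_top ENNReal.ofReal_ne_top]
  simp only [norm_eq_abs, sq_abs, Module.finrank_self, Nat.cast_one] at hpolar
  have hsphere : ∫⁻ ω : sphere (0 : ℝ) 1, ENNReal.ofReal |(ω : ℝ)| ^ q
      ∂(volume : Measure ℝ).toSphere = ENNReal.ofReal 2 := by
    have hω (ω : sphere (0 : ℝ) 1) : |(ω : ℝ)| = 1 := norm_eq_of_mem_sphere ω
    simp [hω]
  rw [hpolar, hsphere, ← ENNReal.ofReal_mul zero_le_two, mul_div_cancel₀ _ two_ne_zero]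

end PolarCoordinates

section Slicing

open Module

variable {E : Type*} [NormedAddCommGroup E] [InnerProductSpace ℝ E] [FiniteDimensional ℝ E]
  [MeasurableSpace E] [BorelSpace E]

theorem measurePreserving_smul_add_orthogonal {u : E} (hu : ‖u‖ = 1) :
    MeasurePreserving fun p : ℝ × (ℝ ∙ u)ᗮ ↦ p.1 • u + (p.2 : E) :=
  ((ℝ ∙ u).orthogonalDecomposition.symm.measurePreserving.comp
    (WithLp.volume_preserving_toLp (ℝ ∙ u) (ℝ ∙ u)ᗮ)).comp
      ((LinearIsometryEquiv.toSpanUnitSingleton u hu).measurePreserving.prod (.id volume))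

theorem lintegral_lintegral_orthogonal_mul {u : E} (hu : ‖u‖ = 1) {f : E → ℝ≥0∞}
    (hf : AEMeasurable f) {g : ℝ → ℝ≥0∞} (hg : Measurable g) :
    ∫⁻ t : ℝ, (∫⁻ y : (ℝ ∙ u)ᗮ, f (t • u + y)) * g t = ∫⁻ x, f x * g (inner ℝ u x) := by
  have hmp := measurePreserving_smul_add_orthogonal hu
  have hprod : AEMeasurable (fun p : ℝ × (ℝ ∙ u)ᗮ ↦ f (p.1 • u + p.2)) :=
    hf.comp_quasiMeasurePreserving hmp.quasiMeasurePreserving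
  have hinner (t : ℝ) (y : (ℝ ∙ u)ᗮ) : inner ℝ u (t • u + y) = t := by
    simp [inner_add_right, inner_smul_right, hu,
      Submodule.mem_orthogonal_singleton_iff_inner_right.1 y.2]
  calc ∫⁻ t : ℝ, (∫⁻ y : (ℝ ∙ u)ᗮ, f (t • u + y)) * g t
      = ∫⁻ t : ℝ, ∫⁻ y : (ℝ ∙ u)ᗮ, f (t • u + y) * g t := by
        refine lintegral_congr_ae ?_
        filter_upwards [hprod.aestronglyMeasurable.prodMk_left] with t ht
        exact (lintegral_mul_const'' _ ht.aemeasurable).symm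
    _ = ∫⁻ p : ℝ × (ℝ ∙ u)ᗮ, f (p.1 • u + p.2) * g p.1 :=
        (lintegral_prod _ (hprod.mul (hg.comp measurable_fst).aemeasurable)).symm
    _ = ∫⁻ x, f x * g (inner ℝ u x) := by
        have hfg : AEMeasurable fun x : E ↦ f x * g (inner ℝ u x) := by fun_prop
        rw [← hmp.map_eq, lintegral_map' (hmp.map_eq.symm ▸ hfg) hmp.aemeasurable]
        simp only [hinner]

theorem lintegral_exp_neg_norm_sq :
    ∫⁻ x : E, ENNReal.ofReal (exp (-‖x‖ ^ 2)) =
      ENNReal.ofReal (π ^ ((finrank ℝ E : ℝ) / 2)) := by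
  have hval : ∫ x : E, exp (-‖x‖ ^ 2) = π ^ ((finrank ℝ E : ℝ) / 2) := by
    simpa using GaussianFourier.integral_rexp_neg_mul_sq_norm (V := E) one_pos
  have hint : Integrable fun x : E ↦ exp (-‖x‖ ^ 2) :=
    .of_integral_ne_zero (hval ▸ (rpow_pos_of_pos pi_pos _).ne')
  rw [← hval, ofReal_integral_eq_lintegral_ofReal hint (.of_forall fun _ ↦ (exp_pos _).le)]

theorem lintegral_exp_neg_norm_sq_mul_rpow_abs_inner {u : E} (hu : ‖u‖ = 1) {q : ℝ}
    (hq : -1 < q) :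
    ∫⁻ x : E, ENNReal.ofReal (exp (-‖x‖ ^ 2)) * ENNReal.ofReal |inner ℝ u x| ^ q =
      ENNReal.ofReal (π ^ (((finrank ℝ E : ℝ) - 1) / 2) * Gamma ((q + 1) / 2)) := by
  have hu0 : u ≠ 0 := norm_ne_zero_iff.1 (by simp [hu])
  have hfinrank : (finrank ℝ (ℝ ∙ u)ᗮ : ℝ) = finrank ℝ E - 1 := by
    rw [← (ℝ ∙ u).finrank_add_finrank_orthogonal, finrank_span_singleton hu0]
    simp
  have hslice (t : ℝ) : ∫⁻ y : (ℝ ∙ u)ᗮ, ENNReal.ofReal (exp (-‖t • u + (y : E)‖ ^ 2)) =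
      ENNReal.ofReal (π ^ (((finrank ℝ E : ℝ) - 1) / 2)) *
        ENNReal.ofReal (exp (-t ^ 2)) := by
    rw [← hfinrank, ← lintegral_exp_neg_norm_sq, ← lintegral_mul_const _ (by fun_prop)]
    refine lintegral_congr fun y ↦ ?_
    have hpythagoras : ‖t • u + (y : E)‖ ^ 2 = ‖y‖ ^ 2 + t ^ 2 := by
      simp [norm_add_sq_real, inner_smul_left, norm_smul, hu, add_comm (t ^ 2),
        Submodule.mem_orthogonal_singleton_iff_inner_right.1 y.2]
    rw [hpythagoras, neg_add, exp_add, ENNReal.ofReal_mul (exp_pos _).le]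
  rw [← lintegral_lintegral_orthogonal_mul hu (by fun_prop)
    (g := fun t ↦ ENNReal.ofReal |t| ^ q) (by fun_prop)]
  simp only [hslice, mul_assoc]
  rw [lintegral_const_mul _ (by fun_prop), lintegral_exp_neg_sq_mul_rpow_abs hq,
    ENNReal.ofReal_mul (by positivity)]

end Slicing

section SphericalAverages

open Module

variable {E : Type*} [NormedAddCommGroup E] [InnerProductSpace ℝ E] [FiniteDimensional ℝ E]
  [MeasurableSpace E] [BorelSpace E]

theorem lintegral_toSphere_rpow_abs_inner {u : E} (hu : ‖u‖ = 1) {q : ℝ} (hq : -1 < q) :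
    ∫⁻ ω : sphere (0 : E) 1, ENNReal.ofReal |inner ℝ u ω| ^ q ∂(volume : Measure E).toSphere =
      ENNReal.ofReal (2 * π ^ (((finrank ℝ E : ℝ) - 1) / 2) * Gamma ((q + 1) / 2) /
        Gamma ((q + finrank ℝ E) / 2)) := by
  have : Nontrivial E := ⟨u, 0, norm_ne_zero_iff.1 (by simp [hu])⟩
  have hd : (1 : ℝ) ≤ finrank ℝ E := mod_cast Module.finrank_pos (R := ℝ) (M := E)
  have hΓ : 0 < Gamma ((q + finrank ℝ E) / 2) := Gamma_pos_of_pos (by linarith)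
  have hpolar := lintegral_exp_neg_norm_sq_mul_of_homogeneous (volume : Measure E)
    (g := fun x ↦ ENNReal.ofReal |inner ℝ u x| ^ q) (q := q) (by fun_prop) (by linarith)
    fun r x hr ↦ by
      rw [inner_smul_right, abs_mul, abs_of_pos hr, ENNReal.ofReal_mul hr.le,
        ENNReal.mul_rpow_of_ne_top ENNReal.ofReal_ne_top ENNReal.ofReal_ne_top]
  rw [lintegral_exp_neg_norm_sq_mul_rpow_abs_inner hu hq] at hpolar
  rw [(ENNReal.eq_div_iff (by simpa using hΓ) ENNReal.ofReal_ne_top).2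
    ((mul_comm _ _).trans hpolar.symm), ← ENNReal.ofReal_div_of_pos (by positivity)]
  congr 1
  field_simp

theorem laverage_toSphere_rpow_abs_inner [Nontrivial E] (x : E) {q : ℝ} (hq : -1 < q) :
    ⨍⁻ ω : sphere (0 : E) 1, ENNReal.ofReal |inner ℝ (ω : E) x| ^ q
        ∂(volume : Measure E).toSphere =
      ENNReal.ofReal (Gamma ((finrank ℝ E : ℝ) / 2) / Gamma (1 / 2) *
        (Gamma ((q + 1) / 2) / Gamma ((q + finrank ℝ E) / 2))) *
          ENNReal.ofReal ‖x‖ ^ q := by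
  obtain ⟨u, r, hu, hr, rfl⟩ : ∃ (u : E) (r : ℝ), ‖u‖ = 1 ∧ 0 ≤ r ∧ x = r • u := by
    rcases eq_or_ne x 0 with rfl | hx
    · obtain ⟨u, hu⟩ := exists_norm_eq E zero_le_one
      exact ⟨u, 0, hu, le_rfl, (zero_smul ℝ u).symm⟩
    · exact ⟨‖x‖⁻¹ • x, ‖x‖, norm_smul_inv_norm hx, norm_nonneg x, by simp [smul_smul, hx]⟩
  have hscale (ω : sphere (0 : E) 1) : ENNReal.ofReal |inner ℝ (ω : E) (r • u)| ^ q =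
      ENNReal.ofReal r ^ q * ENNReal.ofReal |inner ℝ u ω| ^ q := by
    rw [inner_smul_right, abs_mul, abs_of_nonneg hr, real_inner_comm, ENNReal.ofReal_mul hr,
      ENNReal.mul_rpow_of_ne_top ENNReal.ofReal_ne_top ENNReal.ofReal_ne_top]
  have hmass : (volume : Measure E).toSphere Set.univ = ENNReal.ofReal
      (2 * π ^ (((finrank ℝ E : ℝ) - 1) / 2) * Gamma (1 / 2) /
        Gamma ((finrank ℝ E : ℝ) / 2)) := by
    simpa using lintegral_toSphere_rpow_abs_inner hu (neg_one_lt_zero (R := ℝ))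
  have hd : (1 : ℝ) ≤ finrank ℝ E := mod_cast Module.finrank_pos (R := ℝ) (M := E)
  have hΓd : 0 < Gamma ((finrank ℝ E : ℝ) / 2) := Gamma_pos_of_pos (by linarith)
  simp only [hscale, norm_smul, hu, mul_one, norm_of_nonneg hr]
  rw [laverage_eq, lintegral_const_mul _ (by fun_prop), lintegral_toSphere_rpow_abs_inner hu hq,
    hmass, mul_div_assoc, ← ENNReal.ofReal_div_of_pos (div_pos (by positivity) hΓd), mul_comm]
  congr 2
  field_simp

theorem stmt9_general [Nontrivial E] {f : E → ℝ≥0∞} (hf : AEMeasurable f) {μ : ℝ} (hμ : -1 < μ) :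
    ⨍⁻ θ : sphere (0 : E) 1, ∫⁻ t : ℝ, (∫⁻ y : (ℝ ∙ (θ : E))ᗮ, f (t • (θ : E) + y)) *
        ENNReal.ofReal |t| ^ μ ∂volume ∂(volume : Measure E).toSphere =
      ENNReal.ofReal (Gamma ((finrank ℝ E : ℝ) / 2) / Gamma (1 / 2) *
          (Gamma ((μ + 1) / 2) / Gamma ((μ + finrank ℝ E) / 2))) *
        ∫⁻ x, f x * ENNReal.ofReal ‖x‖ ^ μ := by
  set c := ENNReal.ofReal (Gamma ((finrank ℝ E : ℝ) / 2) / Gamma (1 / 2) *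
    (Gamma ((μ + 1) / 2) / Gamma ((μ + finrank ℝ E) / 2)))
  calc _ = ⨍⁻ θ : sphere (0 : E) 1, ∫⁻ x, f x * ENNReal.ofReal |inner ℝ (θ : E) x| ^ μ
          ∂volume ∂(volume : Measure E).toSphere := by
        congr! 2 with θ
        exact lintegral_lintegral_orthogonal_mul (norm_eq_of_mem_sphere θ) hf
          (g := fun t ↦ ENNReal.ofReal |t| ^ μ) (by fun_prop)
    _ = ∫⁻ x, f x * ⨍⁻ θ : sphere (0 : E) 1, ENNReal.ofReal |inner ℝ (θ : E) x| ^ μ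
          ∂(volume : Measure E).toSphere := by
        simp only [laverage]
        rw [lintegral_lintegral_swap (hf.comp_snd.mul (by fun_prop))]
        exact lintegral_congr fun x ↦ lintegral_const_mul _ (by fun_prop)
    _ = ∫⁻ x, c * (f x * ENNReal.ofReal ‖x‖ ^ μ) := by
        simp only [laverage_toSphere_rpow_abs_inner _ hμ, mul_left_comm (f _), c]
    _ = c * ∫⁻ x, f x * ENNReal.ofReal ‖x‖ ^ μ :=
        lintegral_const_mul'' _ (hf.mul (by fun_prop))

end SphericalAverages

theorem lintegral_indicator_one_mul {α : Type*} [MeasurableSpace α] {ν : Measure α} {s : Set α}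
    (hs : MeasurableSet s) (f : α → ℝ≥0∞) :
    ∫⁻ x, s.indicator 1 x * f x ∂ν = ∫⁻ x in s, f x ∂ν := by
  simp only [← lintegral_indicator hs, ← Set.indicator_mul_left, Pi.one_apply, one_mul]

theorem sectVol_eq_lintegral_indicator {n : ℕ} {S : Set (EuclideanSpace ℝ (Fin n))}
    (hS : MeasurableSet S) (θ : sphere (0 : EuclideanSpace ℝ (Fin n)) 1) (t : ℝ) :
    sectVol n S θ t = ∫⁻ y : (ℝ ∙ (θ : EuclideanSpace ℝ (Fin n)))ᗮ,
      S.indicator 1 (t • (θ : EuclideanSpace ℝ (Fin n)) + y) :=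
  (lintegral_indicator_one (hS.preimage (by fun_prop))).symm

/-- Exact weighted identity for volumes of hyperplane cross-sections of a Borel measurable set
(case `k = n-1`, `p = 1`). -/
theorem stmt9 (n : ℕ) (hn : 2 ≤ n) (S : Set (EuclideanSpace ℝ (Fin n))) (hS : MeasurableSet S)
    (μ : ℝ) (hμ : -1 < μ) :
    (∫⁻ θ, ∫⁻ t : ℝ, sectVol n S θ t * ENNReal.ofReal |t| ^ μ ∂volume ∂(sphMeasure n)) =
      ENNReal.ofReal (Real.Gamma ((n : ℝ) / 2) / Real.Gamma (1 / 2) *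
          (Real.Gamma ((μ + 1) / 2) / Real.Gamma ((μ + n) / 2))) *
        ∫⁻ x in S, ENNReal.ofReal ‖x‖ ^ μ := by
  have : Nonempty (Fin n) := ⟨⟨0, by lia⟩⟩
  simp only [sectVol_eq_lintegral_indicator hS, ← lintegral_indicator_one_mul hS]
  simpa only [finrank_euclideanSpace_fin] using!
    stmt9_general (measurable_one.indicator hS).aemeasurable hμ
end
end
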